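/- Let p : [0,∞) → [0,1] be continuous with p(0)=1, γ > 1/G_∞, and let λ = p̂^{-1}(1/γ) > 0. Suppose Z : [0,∞) → [1,∞) is nondecreasing and satisfies Z(t) = 1 + γ ∫₀^t Z(t−s) p(s) ds. Then e^{-λt} Z(t) → 1/(λ γ ∫₀^∞ s e^{-λs} p(s) ds) as t → ∞. -/

import Mathlib

open MeasureTheory Set Real Filter

theorem ren_stepA (v f e : ℝ → ℝ) (B K κ δ C : ℝ) (hvm : Measurable v) (hvB : ∀ x, |v x| ≤ B)
    (hK : 0 ≤ K) (hvK : ∀ x y, 0 ≤ x → 0 ≤ y → |v x - v y| ≤ K * |x - y|)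
    (hf0 : ∀ s, 0 < s → 0 ≤ f s)
    (hfi : IntegrableOn f (Ioi 0)) (hf1 : ∫ s in Ioi (0:ℝ), f s = 1)
    (hκ : 0 < κ) (hδ : 0 < δ) (hfκ : ∀ s, 0 < s → s ≤ 2 * δ → κ ≤ f s)
    (he : Tendsto e atTop (nhds 0))
    (hv : ∀ t, 0 ≤ t → v t = e t + ∫ s in Ioi (0:ℝ), v (t - s) * f s)
    (hC : ∀ ε > 0, ∀ᶠ t in atTop, v t ≤ C + ε)
    (t : ℕ → ℝ) (ht : Tendsto t atTop atTop) (htC : Tendsto (fun n => v (t n)) atTop (nhds C))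
    (s0 : ℝ) (hs0 : 0 ≤ s0) (hs1 : s0 ≤ δ) :
    Tendsto (fun n => v (t n - s0)) atTop (nhds C) := by
  have hsub : ∀ s, Tendsto (fun n => t n - s) atTop atTop := fun s =>
    tendsto_atTop_add_const_right _ (-s) ht
  have hvmn : ∀ n, Measurable (fun s => v (t n - s)) := fun n =>
    hvm.comp (measurable_const.sub measurable_id)
  have hfm : AEStronglyMeasurable f (volume.restrict (Ioi 0)) := hfi.aestronglyMeasurable
  have hB : 0 ≤ B := (abs_nonneg _).trans (hvB 0)
  have hGb : ∀ n s, |max (v (t n - s) - C) 0| ≤ B + |C| := by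
    intro n s
    rw [abs_of_nonneg (le_max_right _ _)]
    have h1 := abs_le.1 (hvB (t n - s))
    have h2 := neg_abs_le C
    exact max_le (by linarith) (by positivity)
  have hPb : ∀ n s, |max (C - v (t n - s)) 0| ≤ B + |C| := by
    intro n s
    rw [abs_of_nonneg (le_max_right _ _)]
    have h1 := abs_le.1 (hvB (t n - s))
    have h2 := le_abs_self C
    exact max_le (by linarith) (by positivity)
  have hGm : ∀ n, Measurable (fun s => max (v (t n - s) - C) 0) := fun n =>
    ((hvmn n).sub measurable_const).max measurable_const
  have hPm : ∀ n, Measurable (fun s => max (C - v (t n - s)) 0) := fun n =>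
    (measurable_const.sub (hvmn n)).max measurable_const
  have hGi : ∀ n, IntegrableOn (fun s => max (v (t n - s) - C) 0 * f s) (Ioi 0) := fun n =>
    Integrable.bdd_mul (c := B + |C|) hfi (hGm n).aestronglyMeasurable (ae_of_all _ fun s => hGb n s)
  have hPi : ∀ n, IntegrableOn (fun s => max (C - v (t n - s)) 0 * f s) (Ioi 0) := fun n =>
    Integrable.bdd_mul (c := B + |C|) hfi (hPm n).aestronglyMeasurable (ae_of_all _ fun s => hPb n s)
  have hvi : ∀ n, IntegrableOn (fun s => v (t n - s) * f s) (Ioi 0) := fun n =>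
    Integrable.bdd_mul (c := B) hfi (hvmn n).aestronglyMeasurable (ae_of_all _ fun s => hvB _)
  have hG : Tendsto (fun n => ∫ s in Ioi (0:ℝ), max (v (t n - s) - C) 0 * f s) atTop (nhds 0) := by
    have := tendsto_integral_of_dominated_convergence (μ := volume.restrict (Ioi (0:ℝ)))
      (F := fun n s => max (v (t n - s) - C) 0 * f s) (f := fun _ => 0)
      (fun s => (B + |C|) * |f s|) (fun n => (hGi n).aestronglyMeasurable)
      (hfi.abs.const_mul _) ?_ ?_
    · simpa using this
    · intro n
      refine ae_of_all _ fun s => ?_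
      rw [norm_mul]
      exact mul_le_mul_of_nonneg_right (hGb n s) (abs_nonneg _)
    · refine ae_of_all _ fun s => ?_
      have : Tendsto (fun n => max (v (t n - s) - C) 0) atTop (nhds 0) := by
        rw [Metric.tendsto_atTop']
        intro ε hε
        obtain ⟨N, hN⟩ := eventually_atTop.1 ((hsub s).eventually (hC (ε/2) (by positivity)))
        refine ⟨N, fun n hn => ?_⟩
        rw [Real.dist_eq, sub_zero, abs_of_nonneg (le_max_right _ _)]
        exact max_lt (by linarith [hN n hn.le]) hε
      simpa using this.mul_const (f s)
  have hP : Tendsto (fun n => ∫ s in Ioi (0:ℝ), max (C - v (t n - s)) 0 * f s) atTop (nhds 0) := by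
    have h1 : Tendsto (fun n => (∫ s in Ioi (0:ℝ), max (v (t n - s) - C) 0 * f s)
        + (C - v (t n) + e (t n))) atTop (nhds (0 + (C - C + 0))) :=
      hG.add ((tendsto_const_nhds.sub htC).add (he.comp ht))
    rw [show (0 + (C - C + 0)) = (0:ℝ) by ring] at h1
    refine h1.congr' ?_
    filter_upwards [ht.eventually (eventually_ge_atTop 0)] with n hn
    have h2 : ∫ s in Ioi (0:ℝ), max (C - v (t n - s)) 0 * f s =
        ∫ s in Ioi (0:ℝ), (max (v (t n - s) - C) 0 * f s + (C * f s - v (t n - s) * f s)) := by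
      congr 1
      ext s
      have : max (C - v (t n - s)) 0 = max (v (t n - s) - C) 0 + (C - v (t n - s)) := by
        rcases le_total C (v (t n - s)) with h | h
        · rw [max_eq_right (by linarith), max_eq_left (by linarith)]; ring
        · rw [max_eq_left (by linarith), max_eq_right (by linarith)]; ring
      rw [this]; ring
    have hsi : IntegrableOn (fun s => C * f s - v (t n - s) * f s) (Ioi 0) :=
      (hfi.const_mul C).sub (hvi n)
    rw [h2, integral_add (hGi n) hsi, integral_sub (hfi.const_mul C) (hvi n), integral_const_mul, hf1, hv (t n) hn]
    ring
  rw [Metric.tendsto_atTop']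
  intro ε hε
  set η := min δ (ε / (2 * (K + 1))) with hη
  have hη0 : 0 < η := lt_min hδ (by positivity)
  have hηK : K * η ≤ ε / 2 := by
    have : η ≤ ε / (2 * (K + 1)) := min_le_right _ _
    rw [le_div_iff₀ (by positivity)] at this
    nlinarith
  have hηδ : η ≤ δ := min_le_left _ _
  have hev : ∀ᶠ n in atTop, dist (v (t n - s0)) C < ε := by
    filter_upwards [hP.eventually (gt_mem_nhds (show 0 < ε / 2 * κ * η by positivity)),
      (hsub s0).eventually (hC (ε/2) (by positivity)),
      ht.eventually (eventually_ge_atTop (2 * δ))] with n h1 h2 h3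
    rw [Real.dist_eq, abs_lt]
    refine ⟨?_, by linarith⟩
    by_contra hcon
    have hcon' : v (t n - s0) ≤ C - ε := by linarith
    refine absurd h1 (not_lt.2 ?_)
    have hJ : Ioc s0 (s0 + η) ⊆ Ioi (0:ℝ) := fun x hx => lt_of_le_of_lt hs0 hx.1
    have h4 : ∫ s in Ioc s0 (s0 + η), ε / 2 * κ ≤
        ∫ s in Ioc s0 (s0 + η), max (C - v (t n - s)) 0 * f s := by
      refine setIntegral_mono_on (integrable_const _) ((hPi n).mono_set hJ) measurableSet_Ioc ?_
      intro s hs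
      have h5 := hvK (t n - s) (t n - s0) (by linarith [hs.2]) (by linarith)
      have h6 : |t n - s - (t n - s0)| ≤ η := by
        rw [abs_le]; constructor <;> linarith [hs.1, hs.2]
      have h7 : v (t n - s) - v (t n - s0) ≤ K * η :=
        (le_abs_self _).trans (h5.trans (mul_le_mul_of_nonneg_left h6 hK))
      have h8 : ε / 2 ≤ max (C - v (t n - s)) 0 := le_max_of_le_left (by linarith)
      have h9 : κ ≤ f s := hfκ s (hJ hs) (by linarith [hs.2])
      exact mul_le_mul h8 h9 hκ.le (le_max_right _ _)
    have h5 : ∫ s in Ioc s0 (s0 + η), max (C - v (t n - s)) 0 * f s ≤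
        ∫ s in Ioi 0, max (C - v (t n - s)) 0 * f s := by
      refine setIntegral_mono_set (hPi n) ?_ (LE.le.eventuallyLE hJ)
      filter_upwards [ae_restrict_mem measurableSet_Ioi] with s hs
      exact mul_nonneg (le_max_right _ _) (hf0 s hs)
    have h6 : ∫ s in Ioc s0 (s0 + η), ε / 2 * κ = ε / 2 * κ * η := by
      simp [hη0.le]; ring
    linarith
  obtain ⟨N, hN⟩ := eventually_atTop.1 hev
  exact ⟨N, fun n hn => hN n hn.le⟩

theorem ren_stepB (v f e E : ℝ → ℝ) (B K κ δ C E0 : ℝ) (hvm : Measurable v) (hvB : ∀ x, |v x| ≤ B)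
    (hK : 0 ≤ K) (hvK : ∀ x y, 0 ≤ x → 0 ≤ y → |v x - v y| ≤ K * |x - y|)
    (hf0 : ∀ s, 0 < s → 0 ≤ f s)
    (hfi : IntegrableOn f (Ioi 0)) (hf1 : ∫ s in Ioi (0:ℝ), f s = 1)
    (hfs : IntegrableOn (fun s => s * f s) (Ioi 0))
    (hκ : 0 < κ) (hδ : 0 < δ) (hfκ : ∀ s, 0 < s → s ≤ 2 * δ → κ ≤ f s)
    (he : Tendsto e atTop (nhds 0))
    (hv : ∀ t, 0 ≤ t → v t = e t + ∫ s in Ioi (0:ℝ), v (t - s) * f s)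
    (hE : ∀ t, 0 ≤ t → ∫ s in Ioi (0:ℝ), f s * (∫ r in (0:ℝ)..s, v (t - r)) = E t)
    (hE0 : Tendsto E atTop (nhds E0))
    (hC : ∀ ε > 0, ∀ᶠ t in atTop, v t ≤ C + ε)
    (hC' : ∀ ε > 0, ∃ᶠ t in atTop, C - ε < v t) :
    C * ∫ s in Ioi (0:ℝ), s * f s = E0 := by
  have hex : ∀ n : ℕ, ∃ t : ℝ, (n : ℝ) ≤ t ∧ C - 1 / ((n:ℝ) + 1) < v t ∧ v t ≤ v t := by
    intro n
    obtain ⟨t, h1, h2⟩ := ((hC' (1 / ((n:ℝ)+1)) (by positivity)).and_eventually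
      (eventually_ge_atTop (n:ℝ))).exists
    exact ⟨t, h2, h1, le_rfl⟩
  choose t ht1 ht2 _ using hex
  have ht : Tendsto t atTop atTop := tendsto_atTop_mono ht1 tendsto_natCast_atTop_atTop
  have htC : Tendsto (fun n => v (t n)) atTop (nhds C) := by
    rw [tendsto_order]
    constructor
    · intro a ha
      have : Tendsto (fun n : ℕ => C - 1 / ((n:ℝ) + 1)) atTop (nhds (C - 0)) :=
        tendsto_const_nhds.sub tendsto_one_div_add_atTop_nhds_zero_nat
      rw [sub_zero] at this
      filter_upwards [this.eventually (lt_mem_nhds ha)] with n hn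
      exact hn.trans (ht2 n)
    · intro a ha
      filter_upwards [ht.eventually (hC ((a - C)/2) (by linarith))] with n hn
      linarith
  have key : ∀ k : ℕ, ∀ s, 0 ≤ s → s ≤ k * δ → Tendsto (fun n => v (t n - s)) atTop (nhds C) := by
    intro k
    induction k with
    | zero =>
      intro s h0 h1
      have : s = 0 := by simp at h1; linarith
      subst this; simpa using htC
    | succ k ih =>
      intro s h0 h1
      push_cast at h1
      rcases le_total s δ with h | h
      · exact ren_stepA v f e B K κ δ C hvm hvB hK hvK hf0 hfi hf1 hκ hδ hfκ he hv hC t ht htC s h0 h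
      · have h3 := ih (s - δ) (by linarith) (by linarith)
        have := ren_stepA v f e B K κ δ C hvm hvB hK hvK hf0 hfi hf1 hκ hδ hfκ he hv hC
          (fun n => t n - (s - δ)) (tendsto_atTop_add_const_right _ (-(s-δ)) ht) h3 δ hδ.le le_rfl
        refine this.congr fun n => ?_
        congr 1; ring
  have key' : ∀ s, 0 ≤ s → Tendsto (fun n => v (t n - s)) atTop (nhds C) := by
    intro s hs
    obtain ⟨k, hk⟩ := exists_nat_ge (s / δ)
    exact key k s hs ((div_le_iff₀ hδ).1 hk)
  have hB : 0 ≤ B := (abs_nonneg _).trans (hvB 0)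
  have hvmn : ∀ n, Measurable (fun s => v (t n - s)) := fun n =>
    hvm.comp (measurable_const.sub measurable_id)
  have hin : ∀ s, 0 < s → Tendsto (fun n => ∫ r in (0:ℝ)..s, v (t n - r)) atTop (nhds (s * C)) := by
    intro s hs
    have := intervalIntegral.tendsto_integral_filter_of_dominated_convergence (μ := volume)
      (a := 0) (b := s) (l := atTop) (F := fun n r => v (t n - r)) (f := fun _ => C) (fun _ => B)
      (Eventually.of_forall fun n => (hvmn n).aestronglyMeasurable)
      (Eventually.of_forall fun n => ae_of_all _ fun r _ => hvB _) (by simp)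
      (ae_of_all _ fun r hr => key' r (by rw [uIoc_of_le hs.le] at hr; exact hr.1.le))
    simpa using this
  have hvint : ∀ n a b, IntervalIntegrable (fun r => v (t n - r)) volume a b := by
    intro n a b
    exact (intervalIntegrable_const (c := B)).mono_fun (hvmn n).aestronglyMeasurable
      (ae_of_all _ fun r => (hvB _).trans (le_abs_self B))
  have hlim : Tendsto (fun n => ∫ s in Ioi (0:ℝ), f s * (∫ r in (0:ℝ)..s, v (t n - r))) atTop
      (nhds (∫ s in Ioi (0:ℝ), f s * (s * C))) := by
    refine tendsto_integral_of_dominated_convergence (fun s => B * (s * f s)) ?_ (hfs.const_mul B) ?_ ?_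
    · intro n
      refine hfi.aestronglyMeasurable.mul ?_
      exact (intervalIntegral.continuous_primitive (hvint n) 0).aestronglyMeasurable
    · intro n
      filter_upwards [ae_restrict_mem measurableSet_Ioi] with s hs
      have h1 := intervalIntegral.norm_integral_le_of_norm_le_const (a := 0) (b := s)
        (f := fun r => v (t n - r)) (C := B) (fun r _ => hvB _)
      rw [sub_zero, abs_of_pos hs] at h1
      rw [norm_mul, Real.norm_of_nonneg (hf0 s hs)]
      nlinarith [mul_le_mul_of_nonneg_left h1 (hf0 s hs)]
    · filter_upwards [ae_restrict_mem measurableSet_Ioi] with s hs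
      exact (hin s hs).const_mul _
  have h2 : Tendsto (fun n => ∫ s in Ioi (0:ℝ), f s * (∫ r in (0:ℝ)..s, v (t n - r))) atTop
      (nhds E0) := by
    refine (hE0.comp ht).congr' ?_
    filter_upwards [ht.eventually (eventually_ge_atTop 0)] with n hn
    exact (hE _ hn).symm
  have h3 := tendsto_nhds_unique hlim h2
  rw [← h3, ← integral_const_mul]
  congr 1; ext s; ring

theorem ren_ident (w f : ℝ → ℝ) (b : ℝ → ℝ) (l : ℝ) (hl : 0 < l) (hwm : Measurable w)
    (hw0 : ∀ x, 0 ≤ w x) (hwn : ∀ x, x < 0 → w x = 0) (hwb : ∀ T x, x ≤ T → w x ≤ b T)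
    (hf0 : ∀ s, 0 < s → 0 ≤ f s)
    (hfi : IntegrableOn f (Ioi 0)) (hf1 : ∫ s in Ioi (0:ℝ), f s = 1)
    (hfs : IntegrableOn (fun s => s * f s) (Ioi 0))
    (hv : ∀ t, 0 ≤ t → w t = exp (-l * t) + ∫ s in Ioi (0:ℝ), w (t - s) * f s)
    (t : ℝ) (ht : 0 ≤ t) :
    IntegrableOn (fun s => f s * (∫ r in (0:ℝ)..s, w (t - r))) (Ioi 0) ∧
    ∫ s in Ioi (0:ℝ), f s * (∫ r in (0:ℝ)..s, w (t - r)) = (1 - exp (-l * t)) / l := by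
  have hwi : ∀ x y, IntervalIntegrable w volume x y := by
    intro x y
    refine (intervalIntegrable_const (c := b (max x y))).mono_fun' hwm.aestronglyMeasurable ?_
    filter_upwards [ae_restrict_mem measurableSet_uIoc] with r hr
    rw [Real.norm_of_nonneg (hw0 r)]
    exact hwb _ _ hr.2
  have hwi' : ∀ x y, IntervalIntegrable (fun r => w (t - r)) volume x y := by
    intro x y
    simpa using (hwi (t - x) (t - y)).comp_sub_left t
  have hbt : 0 ≤ b t := (hw0 t).trans (hwb t t le_rfl)
  have hint : IntegrableOn (fun s => f s * (∫ r in (0:ℝ)..s, w (t - r))) (Ioi 0) := by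
    refine (hfs.const_mul (b t)).mono' ?_ ?_
    · refine hfi.aestronglyMeasurable.mul ?_
      exact (intervalIntegral.continuous_primitive hwi' 0).aestronglyMeasurable
    · filter_upwards [ae_restrict_mem measurableSet_Ioi] with s hs
      have hs' : 0 < s := hs
      have h1 := intervalIntegral.norm_integral_le_of_norm_le_const (a := 0) (b := s)
        (f := fun r => w (t - r)) (C := b t) (fun r hr => by
          rw [uIoc_of_le hs'.le] at hr
          rw [Real.norm_of_nonneg (hw0 _)]
          exact hwb _ _ (by linarith [hr.1]))
      rw [sub_zero, abs_of_pos hs'] at h1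
      rw [norm_mul, Real.norm_of_nonneg (hf0 s hs)]
      nlinarith [mul_le_mul_of_nonneg_left h1 (hf0 s hs)]
  refine ⟨hint, ?_⟩
  have hFub : Integrable (Function.uncurry fun x s => w (x - s) * f s)
      ((volume.restrict (Ioc 0 t)).prod (volume.restrict (Ioi 0))) := by
    have h1 : Integrable (fun z : ℝ × ℝ => f z.2)
      ((volume.restrict (Ioc 0 t)).prod (volume.restrict (Ioi 0))) := Integrable.comp_snd hfi _
    have h2 : Integrable (fun z : ℝ × ℝ => min (w (z.1 - z.2)) (b t) * f z.2)
      ((volume.restrict (Ioc 0 t)).prod (volume.restrict (Ioi 0))) := by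
      refine Integrable.bdd_mul (c := b t) h1 ?_ (ae_of_all _ fun z => ?_)
      · exact ((hwm.comp (measurable_fst.sub measurable_snd)).min measurable_const).aestronglyMeasurable
      · rw [Real.norm_of_nonneg (le_min (hw0 _) hbt)]
        exact min_le_right _ _
    refine h2.congr ?_
    rw [Measure.prod_restrict]
    filter_upwards [ae_restrict_mem (measurableSet_Ioc.prod measurableSet_Ioi)] with z hz
    have hz1 : z.1 ≤ t := hz.1.2
    have hz2 : 0 < z.2 := hz.2
    simp only [Function.uncurry]
    rw [min_eq_left (hwb t _ (by linarith))]
  have hswap := integral_integral_swap hFub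
  have hW : ∫ x in (0:ℝ)..t, w x = (1 - exp (-l * t)) / l +
      ∫ s in Ioi (0:ℝ), ∫ x in Ioc (0:ℝ) t, w (x - s) * f s := by
    rw [← hswap]
    have hE : ∫ x in (0:ℝ)..t, exp (-l * x) = (1 - exp (-l * t)) / l := by
      rw [intervalIntegral.integral_comp_mul_left (fun x => exp x) (neg_ne_zero.2 hl.ne')]
      simp
      field_simp
      ring
    rw [← hE, intervalIntegral.integral_of_le ht, intervalIntegral.integral_of_le ht, ← integral_add]
    · exact setIntegral_congr_fun measurableSet_Ioc fun x hx => hv x hx.1.le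
    · exact (by fun_prop : Continuous fun x => exp (-l * x)).integrableOn_Ioc
    · exact hFub.integral_prod_left
  have hpt : ∀ s ∈ Ioi (0:ℝ), f s * (∫ r in (0:ℝ)..s, w (t - r)) =
      (∫ x in (0:ℝ)..t, w x) * f s - ∫ x in Ioc (0:ℝ) t, w (x - s) * f s := by
    intro s hs
    have hs' : 0 < s := hs
    rw [integral_mul_const, ← intervalIntegral.integral_of_le ht,
      intervalIntegral.integral_comp_sub_right, intervalIntegral.integral_comp_sub_left]
    have h1 : ∫ x in (0 - s)..0, w x = 0 := by
      rw [intervalIntegral.integral_of_le (by linarith)]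
      refine (integral_Ioc_eq_integral_Ioo).trans ?_
      exact setIntegral_eq_zero_of_forall_eq_zero fun x hx => hwn x hx.2
    have h2 := intervalIntegral.integral_add_adjacent_intervals (hwi (0 - s) (t - s)) (hwi (t - s) t)
    have h3 := intervalIntegral.integral_add_adjacent_intervals (hwi (0 - s) 0) (hwi 0 t)
    rw [sub_zero]
    have h4 : ∫ x in (t - s)..t, w x = (∫ x in (0:ℝ)..t, w x) - ∫ x in (0 - s)..(t - s), w x := by
      linarith
    rw [h4]; ring
  have hir : IntegrableOn (fun s => ∫ x in Ioc (0:ℝ) t, w (x - s) * f s) (Ioi 0) :=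
    hFub.integral_prod_right
  rw [setIntegral_congr_fun measurableSet_Ioi hpt, integral_sub (hfi.const_mul _) hir,
    integral_const_mul, hf1, hW]
  ring

theorem ren_lip (p Z0 : ℝ → ℝ) (hpc : Continuous p)
    (hp01 : ∀ s, 0 ≤ s → 0 ≤ p s ∧ p s ≤ 1) (γ : ℝ) (hγ : 0 < γ)
    (hm : Monotone Z0) (hn : ∀ x, 0 ≤ Z0 x)
    (hr : ∀ t T, 0 ≤ t → t ≤ T → Z0 t = 1 + γ * ∫ s in (0:ℝ)..T, Z0 (t - s) * p s)
    (x y : ℝ) (hx : 0 ≤ x) (hxy : x ≤ y) : Z0 y - Z0 x ≤ γ * (y - x) * Z0 y := by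
  have hi : ∀ a b, IntervalIntegrable Z0 volume a b := fun a b => hm.intervalIntegrable
  have hi' : ∀ c a b, IntervalIntegrable (fun s => Z0 (c - s)) volume a b := by
    intro c a b
    simpa using (hi (c - a) (c - b)).comp_sub_left c
  have hip : ∀ c a b, IntervalIntegrable (fun s => Z0 (c - s) * p s) volume a b := fun c a b =>
    (hi' c a b).mul_continuousOn hpc.continuousOn
  have hy : 0 ≤ y := hx.trans hxy
  have h1 : Z0 y - Z0 x = γ * ∫ s in (0:ℝ)..y, (Z0 (y - s) * p s - Z0 (x - s) * p s) := by
    rw [intervalIntegral.integral_sub (hip _ _ _) (hip _ _ _)]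
    linarith [hr y y hy le_rfl, hr x y hx hxy]
  have h2 : ∫ s in (0:ℝ)..y, (Z0 (y - s) * p s - Z0 (x - s) * p s) ≤
      ∫ s in (0:ℝ)..y, (Z0 (y - s) - Z0 (x - s)) := by
    refine intervalIntegral.integral_mono_on hy ((hip _ _ _).sub (hip _ _ _))
      ((hi' _ _ _).sub (hi' _ _ _)) fun s hs => ?_
    have h3 := hm (show x - s ≤ y - s by linarith)
    have h4 := hp01 s hs.1
    nlinarith
  have h3 : ∫ s in (0:ℝ)..y, (Z0 (y - s) - Z0 (x - s)) =
      (∫ s in (0:ℝ)..y, Z0 s) - ∫ s in (x - y)..x, Z0 s := by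
    rw [intervalIntegral.integral_sub (hi' _ _ _) (hi' _ _ _),
      intervalIntegral.integral_comp_sub_left, intervalIntegral.integral_comp_sub_left]
    simp
  have h4 := intervalIntegral.integral_add_adjacent_intervals (hi (x - y) 0) (hi 0 x)
  have h5 := intervalIntegral.integral_add_adjacent_intervals (hi 0 x) (hi x y)
  have h6 : 0 ≤ ∫ s in (x - y)..0, Z0 s :=
    intervalIntegral.integral_nonneg (by linarith) fun s _ => hn s
  have h7 : ∫ s in x..y, Z0 s ≤ (y - x) * Z0 y := by
    have := intervalIntegral.integral_mono_on (g := fun _ => Z0 y) hxy (hi x y) (by simp)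
      (fun s hs => hm hs.2)
    simpa using this
  rw [h1, mul_assoc]
  refine mul_le_mul_of_nonneg_left ?_ hγ.le
  linarith


/-- Supercritical case of Theorem 1(1): for `γ > 1/G_∞` (i.e. `γ > 0`, `1/γ < G_∞`) and
`λ = p̂⁻¹(1/γ) > 0`, a nondecreasing solution `Z ≥ 1` of the renewal equation
`Z(t) = 1 + γ ∫₀^t Z(t-s) p(s) ds` satisfies
`e^{-λt} Z(t) → 1/(λ γ ∫₀^∞ s e^{-λs} p(s) ds)`. -/
theorem renewal_supercritical_asymptotics
    (p : ℝ → ℝ) (hpc : Continuous p) (hp0 : p 0 = 1)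
    (hp01 : ∀ s, 0 ≤ s → 0 ≤ p s ∧ p s ≤ 1)
    (γ : ℝ) (hγ : 0 < γ)
    (hγG : ENNReal.ofReal (1 / γ) < ∫⁻ s in Set.Ioi (0:ℝ), ENNReal.ofReal (p s))
    (l : ℝ) (hl : 0 < l)
    (hroot : ∫ s in Set.Ioi (0:ℝ), Real.exp (-l * s) * p s = 1 / γ)
    (Z : ℝ → ℝ)
    (hZ1 : ∀ t, 0 ≤ t → 1 ≤ Z t)
    (hZmono : MonotoneOn Z (Set.Ici 0))
    (hren : ∀ t : ℝ, 0 ≤ t → Z t = 1 + γ * ∫ s in (0:ℝ)..t, Z (t - s) * p s) :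
    Tendsto (fun t => Real.exp (-l * t) * Z t) atTop
      (nhds (1 / (l * γ * ∫ s in Set.Ioi (0:ℝ), s * Real.exp (-l * s) * p s))) := by
  set Z0 : ℝ → ℝ := fun t => if t < 0 then 0 else Z t with hZ0
  have hZ0p : ∀ t, 0 ≤ t → Z0 t = Z t := fun t ht => if_neg (not_lt.2 ht)
  have hZ0n : ∀ t, t < 0 → Z0 t = 0 := fun t ht => if_pos ht
  have hnn : ∀ x, 0 ≤ Z0 x := by
    intro x
    rcases lt_or_ge x 0 with h | h
    · rw [hZ0n x h]
    · rw [hZ0p x h]; linarith [hZ1 x h]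
  have hm : Monotone Z0 := by
    intro x y hxy
    rcases lt_or_ge x 0 with h | h
    · rw [hZ0n x h]; exact hnn y
    · rw [hZ0p x h, hZ0p y (h.trans hxy)]; exact hZmono h (h.trans hxy) hxy
  have hr : ∀ t T, 0 ≤ t → t ≤ T → Z0 t = 1 + γ * ∫ s in (0:ℝ)..T, Z0 (t - s) * p s := by
    intro t T ht hT
    rw [hZ0p t ht, hren t ht, intervalIntegral.integral_of_le ht,
      intervalIntegral.integral_of_le (ht.trans hT),
      setIntegral_eq_of_subset_of_forall_sdiff_eq_zero measurableSet_Ioc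
        (Ioc_subset_Ioc_right hT : Ioc 0 t ⊆ Ioc 0 T)]
    · congr 2
      refine setIntegral_congr_fun measurableSet_Ioc fun s hs => ?_
      rw [hZ0p (t - s) (by linarith [hs.2])]
    · intro s hs
      have : t < s := by
        by_contra h
        exact hs.2 ⟨hs.1.1, not_lt.1 h⟩
      rw [hZ0n (t - s) (by linarith), zero_mul]
  set w : ℝ → ℝ := fun t => exp (-l * t) * Z0 t with hw
  set f : ℝ → ℝ := fun s => γ * (exp (-l * s) * p s) with hf
  have hfc : Continuous f := by fun_prop
  have hf0 : ∀ s, 0 < s → 0 ≤ f s := fun s hs =>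
    mul_nonneg hγ.le (mul_nonneg (exp_pos _).le (hp01 s hs.le).1)
  have hfle : ∀ s, 0 < s → f s ≤ γ * exp (-l * s) := by
    intro s hs
    have := mul_le_mul_of_nonneg_left (hp01 s hs.le).2 (exp_pos (-l * s)).le
    rw [mul_one] at this
    exact mul_le_mul_of_nonneg_left this hγ.le
  have hfi : IntegrableOn f (Ioi 0) := by
    refine ((integrableOn_exp_mul_Ioi (neg_lt_zero.2 hl) 0).const_mul γ).mono'
      hfc.aestronglyMeasurable ?_
    filter_upwards [ae_restrict_mem measurableSet_Ioi] with s hs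
    rw [Real.norm_of_nonneg (hf0 s hs)]
    exact hfle s hs
  have hfs : IntegrableOn (fun s => s * f s) (Ioi 0) := by
    have h1 := integrableOn_rpow_mul_exp_neg_mul_rpow (p := 1) (s := 1) (b := l)
      (by norm_num) one_pos hl
    refine (h1.const_mul γ).mono' (by fun_prop) ?_
    filter_upwards [ae_restrict_mem measurableSet_Ioi] with s hs
    have hs' : 0 < s := hs
    rw [Real.norm_of_nonneg (mul_nonneg hs'.le (hf0 s hs)), rpow_one]
    nlinarith [mul_le_mul_of_nonneg_left (hfle s hs) hs'.le]
  have hf1 : ∫ s in Ioi (0:ℝ), f s = 1 := by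
    rw [hf, integral_const_mul, hroot]
    field_simp
  have hfmu : ∫ s in Ioi (0:ℝ), s * f s =
      γ * ∫ s in Set.Ioi (0:ℝ), s * Real.exp (-l * s) * p s := by
    rw [← integral_const_mul]
    congr 1; ext s; simp only [hf]; ring
  obtain ⟨δ, hδ, hfκ⟩ : ∃ δ > 0, ∀ s, 0 < s → s ≤ 2 * δ → γ / 2 ≤ f s := by
    have h0 : γ / 2 < f 0 := by simp [hf, hp0, hγ]
    obtain ⟨ε, hε, h⟩ := Metric.eventually_nhds_iff.1
      (hfc.continuousAt.eventually (lt_mem_nhds h0))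
    refine ⟨ε / 4, by positivity, fun s hs hs2 => (h ?_).le⟩
    rw [Real.dist_eq, sub_zero, abs_of_pos hs]
    linarith
  have hwm : Measurable w := (by fun_prop : Measurable fun t => exp (-l * t)).mul hm.measurable
  have hw0 : ∀ x, 0 ≤ w x := fun x => mul_nonneg (exp_pos _).le (hnn x)
  have hwn : ∀ x, x < 0 → w x = 0 := fun x hx => by simp [hw, hZ0n x hx]
  have hwb : ∀ T x, x ≤ T → w x ≤ Z0 T := by
    intro T x hx
    rcases lt_or_ge x 0 with h | h
    · rw [hwn x h]; exact hnn T
    · have h1 : exp (-l * x) ≤ 1 := exp_le_one_iff.2 (by nlinarith)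
      exact (mul_le_of_le_one_left (hnn x) h1).trans (hm hx)
  have hv : ∀ t, 0 ≤ t → w t = exp (-l * t) + ∫ s in Ioi (0:ℝ), w (t - s) * f s := by
    intro t ht
    have h1 : ∫ s in Ioi (0:ℝ), w (t - s) * f s =
        exp (-l * t) * (γ * ∫ s in (0:ℝ)..t, Z0 (t - s) * p s) := by
      rw [intervalIntegral.integral_of_le ht, setIntegral_eq_of_subset_of_forall_sdiff_eq_zero
        measurableSet_Ioi (Ioc_subset_Ioi_self : Ioc 0 t ⊆ Ioi 0), ← integral_const_mul,
        ← integral_const_mul]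
      · congr 1; ext s
        simp only [hw, hf]
        have : exp (-l * t) = exp (-l * (t - s)) * exp (-l * s) := by
          rw [← exp_add]; congr 1; ring
        rw [this]; ring
      · intro s hs
        have : t < s := by
          by_contra h
          exact hs.2 ⟨hs.1, not_lt.1 h⟩
        rw [hwn (t - s) (by linarith), zero_mul]
    rw [h1]
    show exp (-l * t) * Z0 t = _
    rw [hr t t ht le_rfl]; ring
  have hid := ren_ident w f Z0 l hl hwm hw0 hwn hwb hf0 hfi hf1 hfs hv
  have hlow : ∀ x y, x ≤ y → exp (-l * (y - x)) * w x ≤ w y := by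
    intro x y hxy
    have h1 : exp (-l * (y - x)) * w x = exp (-l * y) * Z0 x := by
      simp only [hw]
      rw [← mul_assoc, ← exp_add]; congr 2; ring
    rw [h1]
    exact mul_le_mul_of_nonneg_left (hm hxy) (exp_pos _).le
  obtain ⟨B, hB⟩ : ∃ B, ∀ x, |w x| ≤ B := by
    refine ⟨1 / l / (γ / 2 * (δ * (exp (-l * δ)) * δ)), fun x => ?_⟩
    rw [abs_of_nonneg (hw0 x), le_div_iff₀ (by positivity)]
    rcases lt_or_ge x 0 with h | h
    · rw [hwn x h, zero_mul]; positivity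
    obtain ⟨hI, hE⟩ := hid (x + δ) (by linarith)
    have hwi' : ∀ a b, IntervalIntegrable (fun r => w (x + δ - r)) volume a b := by
      intro a b
      refine (intervalIntegrable_const (c := Z0 (x + δ - min a b))).mono_fun'
        (hwm.comp (measurable_const.sub measurable_id)).aestronglyMeasurable ?_
      filter_upwards [ae_restrict_mem measurableSet_uIoc] with r hr
      rw [Real.norm_of_nonneg (hw0 _)]
      exact hwb _ _ (by linarith [hr.1])
    have hin : ∀ s, δ ≤ s → δ * (exp (-l * δ) * w x) ≤ ∫ r in (0:ℝ)..s, w (x + δ - r) := by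
      intro s hs
      rw [← intervalIntegral.integral_add_adjacent_intervals (hwi' 0 δ) (hwi' δ s)]
      have h1 : 0 ≤ ∫ r in δ..s, w (x + δ - r) :=
        intervalIntegral.integral_nonneg hs fun r _ => hw0 _
      have h2 := intervalIntegral.integral_mono_on (f := fun _ => exp (-l * δ) * w x) hδ.le
        (by simp) (hwi' 0 δ) (fun r hr => by
          refine le_trans ?_ (hlow x (x + δ - r) (by linarith [hr.2]))
          refine mul_le_mul_of_nonneg_right (exp_le_exp.2 ?_) (hw0 x)
          nlinarith [hr.1])
      rw [intervalIntegral.integral_const, sub_zero, smul_eq_mul] at h2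
      linarith
    have hJ : Ioc δ (2 * δ) ⊆ Ioi (0:ℝ) := fun y hy => hδ.trans hy.1
    have h1 : ∫ s in Ioc δ (2 * δ), γ / 2 * (δ * (exp (-l * δ) * w x)) ≤
        ∫ s in Ioc δ (2 * δ), f s * (∫ r in (0:ℝ)..s, w (x + δ - r)) := by
      refine setIntegral_mono_on (integrable_const _) (hI.mono_set hJ) measurableSet_Ioc ?_
      intro s hs
      exact mul_le_mul (hfκ s (hJ hs) hs.2) (hin s hs.1.le)
        (mul_nonneg hδ.le (mul_nonneg (exp_pos _).le (hw0 x))) (hf0 s (hJ hs))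
    have h2 : ∫ s in Ioc δ (2 * δ), f s * (∫ r in (0:ℝ)..s, w (x + δ - r)) ≤
        ∫ s in Ioi 0, f s * (∫ r in (0:ℝ)..s, w (x + δ - r)) := by
      refine setIntegral_mono_set hI ?_ (LE.le.eventuallyLE hJ)
      filter_upwards [ae_restrict_mem measurableSet_Ioi] with s hs
      exact mul_nonneg (hf0 s hs)
        (intervalIntegral.integral_nonneg (le_of_lt hs) fun r _ => hw0 _)
    have h3 : ∫ s in Ioc δ (2 * δ), γ / 2 * (δ * (exp (-l * δ) * w x)) =
        w x * (γ / 2 * (δ * (exp (-l * δ)) * δ)) := by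
      rw [setIntegral_const, Real.volume_real_Ioc_of_le (by linarith), smul_eq_mul]; ring
    have h4 : (1 - exp (-l * (x + δ))) / l ≤ 1 / l := by
      gcongr
      linarith [exp_pos (-l * (x + δ))]
    linarith
  have hB0 : 0 ≤ B := (abs_nonneg _).trans (hB 0)
  have hlip1 : ∀ x y, 0 ≤ x → x ≤ y → |w x - w y| ≤ (l + γ) * B * |x - y| := by
    intro x y hx hxy
    have hBx := (le_abs_self _).trans (hB x)
    have hBy := (le_abs_self _).trans (hB y)
    rw [abs_of_nonpos (show x - y ≤ 0 by linarith), abs_le]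
    have hd : 0 ≤ y - x := by linarith
    have q1 : 0 ≤ (y - x) * (B - w x) := mul_nonneg hd (by linarith)
    have q2 : 0 ≤ (y - x) * (B - w y) := mul_nonneg hd (by linarith)
    have q3 : 0 ≤ (y - x) * B := mul_nonneg hd hB0
    constructor
    · have h1 := ren_lip p Z0 hpc hp01 γ hγ hm hnn hr x y hx hxy
      have h2 : w y - w x ≤ exp (-l * y) * (Z0 y - Z0 x) := by
        have : exp (-l * y) * Z0 x ≤ exp (-l * x) * Z0 x :=
          mul_le_mul_of_nonneg_right (exp_le_exp.2 (by nlinarith)) (hnn x)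
        simp only [hw]; linarith
      have h3 := mul_le_mul_of_nonneg_left h1 (exp_pos (-l * y)).le
      have h4 : exp (-l * y) * (γ * (y - x) * Z0 y) = γ * ((y - x) * w y) := by
        simp only [hw]; ring
      have h5 : γ * ((y - x) * w y) ≤ γ * ((y - x) * B) :=
        mul_le_mul_of_nonneg_left (by linarith) hγ.le
      have h6 : 0 ≤ l * ((y - x) * B) := mul_nonneg hl.le q3
      nlinarith
    · have h1 := hlow x y hxy
      have h2 := add_one_le_exp (-l * (y - x))
      have h3 := mul_le_mul_of_nonneg_right h2 (hw0 x)
      have h5 : l * ((y - x) * w x) ≤ l * ((y - x) * B) :=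
        mul_le_mul_of_nonneg_left (by linarith) hl.le
      have h6 : 0 ≤ γ * ((y - x) * B) := mul_nonneg hγ.le q3
      nlinarith
  have hlip : ∀ x y, 0 ≤ x → 0 ≤ y → |w x - w y| ≤ (l + γ) * B * |x - y| := by
    intro x y hx hy
    rcases le_total x y with h | h
    · exact hlip1 x y hx h
    · rw [abs_sub_comm (w x), abs_sub_comm x]; exact hlip1 y x hy h
  have hK : 0 ≤ (l + γ) * B := by positivity
  have he : Tendsto (fun t => exp (-l * t)) atTop (nhds 0) :=
    tendsto_exp_atBot.comp ((tendsto_const_mul_atBot_of_neg (neg_lt_zero.2 hl)).2 tendsto_id)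
  have hE0 : Tendsto (fun t => (1 - exp (-l * t)) / l) atTop (nhds (1 / l)) := by
    simpa using (tendsto_const_nhds (x := (1:ℝ))).sub he |>.div_const l
  set μ := ∫ s in Ioi (0:ℝ), s * f s with hμ
  have hgen : ∀ u : ℝ → ℝ, (∀ x, |u x| ≤ B) →
      (∀ ε > 0, ∀ᶠ t in atTop, u t ≤ limsup u atTop + ε) ∧
      (∀ ε > 0, ∃ᶠ t in atTop, limsup u atTop - ε < u t) := by
    intro u hu
    have hb1 : IsBoundedUnder (· ≤ ·) atTop u :=
      isBoundedUnder_of ⟨B, fun x => (abs_le.1 (hu x)).2⟩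
    have hb2 : IsBoundedUnder (· ≥ ·) atTop u :=
      isBoundedUnder_of ⟨-B, fun x => (abs_le.1 (hu x)).1⟩
    constructor
    · intro ε hε
      exact (eventually_lt_of_limsup_lt (by linarith) hb1).mono fun _ h => h.le
    · intro ε hε
      exact frequently_lt_of_lt_limsup hb2.isCoboundedUnder_le (by linarith)
  have hB' : ∀ x, |(-w x)| ≤ B := fun x => by rw [abs_neg]; exact hB x
  obtain ⟨a1, a2⟩ := hgen w hB
  obtain ⟨b1, b2⟩ := hgen (fun x => -w x) hB'
  have hA := ren_stepB w f (fun t => exp (-l * t)) _ B ((l + γ) * B) (γ / 2) δ _ _ hwm hB hK hlip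
    hf0 hfi hf1 hfs (by positivity) hδ hfκ he hv (fun t ht => (hid t ht).2) hE0 a1 a2
  have hA' := ren_stepB (fun x => -w x) f (fun t => -exp (-l * t)) (fun t => -((1 - exp (-l * t)) / l))
    B ((l + γ) * B) (γ / 2) δ _ (-(1 / l)) hwm.neg hB' hK
    (fun x y hx hy => by
      rw [show -w x - -w y = -(w x - w y) by ring, abs_neg]; exact hlip x y hx hy)
    hf0 hfi hf1 hfs (by positivity) hδ hfκ (by simpa using he.neg)
    (fun t ht => by simp only [neg_mul _ (f _), integral_neg]; rw [hv t ht]; ring)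
    (fun t ht => by
      simp only [intervalIntegral.integral_neg, mul_neg, integral_neg]; rw [(hid t ht).2])
    hE0.neg b1 b2
  rw [← hμ] at hA hA'
  have hl1 : (1:ℝ) / l ≠ 0 := by positivity
  have hμ0 : μ ≠ 0 := by
    intro h
    rw [h, mul_zero] at hA
    exact hl1 hA.symm
  have hc1 : limsup w atTop = 1 / (l * μ) := by
    field_simp at hA ⊢
    linarith
  have hc2 : limsup (fun x => -w x) atTop = -(1 / (l * μ)) := by
    field_simp at hA' ⊢
    linarith
  have hfin : Tendsto w atTop (nhds (1 / (l * μ))) := by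
    rw [tendsto_order]
    constructor
    · intro a ha
      filter_upwards [b1 ((1 / (l * μ) - a) / 2) (by linarith)] with t ht
      rw [hc2] at ht
      linarith
    · intro a ha
      filter_upwards [a1 ((a - 1 / (l * μ)) / 2) (by linarith)] with t ht
      rw [hc1] at ht
      linarith
  rw [mul_assoc, ← hfmu]
  refine hfin.congr' ?_
  filter_upwards [eventually_ge_atTop 0] with t ht
  simp only [hw]
  rw [hZ0p t ht]
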